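/- (Corollary of Theorems 3 and 4: local 2-FWL has stronger link discriminating power than 1-WL.) (i) For every label set Σ, all labeled graphs G = (V,E,l) and G' = (V',E',l') over Σ, and all target links (p,q) in G and (p',q') in G': if (p,q) and (p',q') are 2-FWL_L-indistinguishable, then they are 1-WL-indistinguishable. (ii) There exist unlabeled graphs G, G' and target links (p,q) in G and (p',q') in G' that are 1-WL-indistinguishable but not 2-FWL_L-indistinguishable. -/

import Mathlib

open scoped Classical

universe u v

/-- The common 1-WL color type over label set `σ`:
`C 0 = σ`, `C (t+1) = C t × Multiset (C t)`. -/
def WL1Color (σ : Type u) : ℕ → Type u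
  | 0 => σ
  | t + 1 => WL1Color σ t × Multiset (WL1Color σ t)

/-- The 1-WL coloring of a labeled graph `(G, l)`:
`c¹⁰(v) = l v`, `c¹ᵗ⁺¹(v) = (c¹ᵗ(v), {{c¹ᵗ(u) : u ∈ N(v)}})`. -/
noncomputable def wl1 {σ : Type u} {V : Type v} [Fintype V] (G : SimpleGraph V)
    (l : V → σ) : (t : ℕ) → V → WL1Color σ t
  | 0 => l
  | t + 1 => fun v => (wl1 G l t v, (G.neighborFinset v).val.map (wl1 G l t))

/-- The type of initial pair colors over label set `σ`. -/
def PairColor0 (σ : Type u) : Type u := σ × σ × Bool × Bool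

/-- Initial pair color `c⁰(p,q) = (l p, l q, 1_{(p,q)∈E}, 1_{p=q})`. -/
noncomputable def pairInit {σ : Type u} {V : Type v} (G : SimpleGraph V) (l : V → σ)
    (e : V × V) : PairColor0 σ :=
  (l e.1, l e.2, decide (G.Adj e.1 e.2), decide (e.1 = e.2))

/-- The common (plain/local) 2-WL pair color type over label set `σ`. -/
def WL2Color (σ : Type u) : ℕ → Type u
  | 0 => PairColor0 σ
  | t + 1 => WL2Color σ t × Multiset (WL2Color σ t) × Multiset (WL2Color σ t)

/-- The plain 2-WL coloring:
`c₂ᵗ⁺¹(p,q) = (c₂ᵗ(p,q), {{c₂ᵗ(u,q) : u ∈ V}}, {{c₂ᵗ(p,v) : v ∈ V}})`. -/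
noncomputable def wl2 {σ : Type u} {V : Type v} [Fintype V] (G : SimpleGraph V)
    (l : V → σ) : (t : ℕ) → V × V → WL2Color σ t
  | 0 => pairInit G l
  | t + 1 => fun e =>
      (wl2 G l t e,
        Finset.univ.val.map (fun u => wl2 G l t (u, e.2)),
        Finset.univ.val.map (fun v => wl2 G l t (e.1, v)))

/-- The local 2-WL (2-WL_L) coloring:
`cₗᵗ⁺¹(p,q) = (cₗᵗ(p,q), {{cₗᵗ(u,q) : (u,q) ∈ E}}, {{cₗᵗ(p,v) : (p,v) ∈ E}})`. -/
noncomputable def wl2L {σ : Type u} {V : Type v} [Fintype V] (G : SimpleGraph V)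
    (l : V → σ) : (t : ℕ) → V × V → WL2Color σ t
  | 0 => pairInit G l
  | t + 1 => fun e =>
      (wl2L G l t e,
        (Finset.univ.filter (fun u => G.Adj u e.2)).val.map (fun u => wl2L G l t (u, e.2)),
        (Finset.univ.filter (fun v => G.Adj e.1 v)).val.map (fun v => wl2L G l t (e.1, v)))

/-- The common (plain/local) 2-FWL pair color type over label set `σ`. -/
def FWLColor (σ : Type u) : ℕ → Type u
  | 0 => PairColor0 σ
  | t + 1 => FWLColor σ t × Multiset (FWLColor σ t × FWLColor σ t)

/-- The 2-FWL coloring: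
`c_Fᵗ⁺¹(p,q) = (c_Fᵗ(p,q), {{(c_Fᵗ(u,q), c_Fᵗ(p,u)) : u ∈ V}})`. -/
noncomputable def fwl2 {σ : Type u} {V : Type v} [Fintype V] (G : SimpleGraph V)
    (l : V → σ) : (t : ℕ) → V × V → FWLColor σ t
  | 0 => pairInit G l
  | t + 1 => fun e =>
      (fwl2 G l t e,
        Finset.univ.val.map (fun u => (fwl2 G l t (u, e.2), fwl2 G l t (e.1, u))))

/-- The local 2-FWL (2-FWL_L) coloring:
`c_FLᵗ⁺¹(p,q) = (c_FLᵗ(p,q), {{(c_FLᵗ(u,q), c_FLᵗ(p,u)) : (u,q) ∈ E or (p,u) ∈ E}})`. -/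
noncomputable def fwl2L {σ : Type u} {V : Type v} [Fintype V] (G : SimpleGraph V)
    (l : V → σ) : (t : ℕ) → V × V → FWLColor σ t
  | 0 => pairInit G l
  | t + 1 => fun e =>
      (fwl2L G l t e,
        (Finset.univ.filter (fun u => G.Adj u e.2 ∨ G.Adj e.1 u)).val.map
          (fun u => (fwl2L G l t (u, e.2), fwl2L G l t (e.1, u))))

/-- A target link: an ordered pair of distinct, non-adjacent vertices. -/
def IsTargetLink {V : Type v} (G : SimpleGraph V) (e : V × V) : Prop :=
  e.1 ≠ e.2 ∧ ¬ G.Adj e.1 e.2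

/-- `(p,q)` in `(G,l)` and `(p',q')` in `(G',l')` are 1-WL-indistinguishable. -/
noncomputable def WL1Indist {σ : Type u} {V V' : Type v} [Fintype V] [Fintype V']
    (G : SimpleGraph V) (l : V → σ) (G' : SimpleGraph V') (l' : V' → σ)
    (e : V × V) (e' : V' × V') : Prop :=
  ∀ t : ℕ, wl1 G l t e.1 = wl1 G' l' t e'.1 ∧ wl1 G l t e.2 = wl1 G' l' t e'.2

/-- 2-WL-indistinguishability. -/
noncomputable def WL2Indist {σ : Type u} {V V' : Type v} [Fintype V] [Fintype V']
    (G : SimpleGraph V) (l : V → σ) (G' : SimpleGraph V') (l' : V' → σ)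
    (e : V × V) (e' : V' × V') : Prop :=
  ∀ t : ℕ, wl2 G l t e = wl2 G' l' t e'

/-- Local 2-WL (2-WL_L) indistinguishability. -/
noncomputable def WL2LIndist {σ : Type u} {V V' : Type v} [Fintype V] [Fintype V']
    (G : SimpleGraph V) (l : V → σ) (G' : SimpleGraph V') (l' : V' → σ)
    (e : V × V) (e' : V' × V') : Prop :=
  ∀ t : ℕ, wl2L G l t e = wl2L G' l' t e'

/-- 2-FWL-indistinguishability. -/
noncomputable def FWL2Indist {σ : Type u} {V V' : Type v} [Fintype V] [Fintype V']
    (G : SimpleGraph V) (l : V → σ) (G' : SimpleGraph V') (l' : V' → σ)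
    (e : V × V) (e' : V' × V') : Prop :=
  ∀ t : ℕ, fwl2 G l t e = fwl2 G' l' t e'

/-- Local 2-FWL (2-FWL_L) indistinguishability. -/
noncomputable def FWL2LIndist {σ : Type u} {V V' : Type v} [Fintype V] [Fintype V']
    (G : SimpleGraph V) (l : V → σ) (G' : SimpleGraph V') (l' : V' → σ)
    (e : V × V) (e' : V' × V') : Prop :=
  ∀ t : ℕ, fwl2L G l t e = fwl2L G' l' t e'

/-- The 0/1 labeling trick: augment the labeling with indicator of membership in `{p, q}`. -/
noncomputable def label01 {σ : Type u} {V : Type v} (l : V → σ) (e : V × V) :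
    V → σ × Bool :=
  fun v => (l v, decide (v = e.1 ∨ v = e.2))

/-- 1-WL-with-0/1-labeling indistinguishability of target links. -/
noncomputable def WL1LabelIndist {σ : Type u} {V V' : Type v} [Fintype V] [Fintype V']
    (G : SimpleGraph V) (l : V → σ) (G' : SimpleGraph V') (l' : V' → σ)
    (e : V × V) (e' : V' × V') : Prop :=
  WL1Indist G (label01 l e) G' (label01 l' e') e e'

/-- The number of common neighbors of `p` and `q` in `G`. -/
noncomputable def commonNbrCount {V : Type v} [Fintype V] (G : SimpleGraph V)
    (e : V × V) : ℕ :=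
  (G.neighborFinset e.1 ∩ G.neighborFinset e.2).card

/-- The adjacency bit recorded in a pair color. -/
def FWLColor.adjBit {σ : Type u} : (t : ℕ) → FWLColor σ t → Bool
  | 0, c => c.2.2.1
  | t + 1, c => FWLColor.adjBit t c.1

/-- The 1-WL color of the first vertex, read off from a local 2-FWL pair color. -/
def FWLColor.fstWL1 {σ : Type u} : (t : ℕ) → FWLColor σ t → WL1Color σ t
  | 0, c => c.1
  | t + 1, c => (FWLColor.fstWL1 t c.1,
      (c.2.filter (fun x => FWLColor.adjBit t x.2 = true)).map
        (fun x => FWLColor.fstWL1 t x.1))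

/-- The 1-WL color of the second vertex, read off from a local 2-FWL pair color. -/
def FWLColor.sndWL1 {σ : Type u} : (t : ℕ) → FWLColor σ t → WL1Color σ t
  | 0, c => c.2.1
  | t + 1, c => (FWLColor.sndWL1 t c.1,
      (c.2.filter (fun x => FWLColor.adjBit t x.1 = true)).map
        (fun x => FWLColor.sndWL1 t x.2))

section

variable {σ : Type u} {V : Type v} [Fintype V] (G : SimpleGraph V) (l : V → σ)

theorem adjBit_fwl2L (t : ℕ) (e : V × V) :
    FWLColor.adjBit t (fwl2L G l t e) = true ↔ G.Adj e.1 e.2 := by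
  induction t with
  | zero => exact decide_eq_true_iff
  | succ t ih => exact ih

theorem fstWL1_fwl2L (t : ℕ) (e : V × V) :
    FWLColor.fstWL1 t (fwl2L G l t e) = wl1 G l t e.1 := by
  induction t generalizing e with
  | zero => rfl
  | succ t ih =>
    refine Prod.ext (ih e) ?_
    simp only [FWLColor.fstWL1, fwl2L, wl1, Multiset.filter_map, Multiset.map_map,
      Function.comp_def, ih, adjBit_fwl2L]
    rw [← Finset.filter_val, Finset.filter_filter]
    congr 2
    ext u
    simp +contextual

theorem sndWL1_fwl2L (t : ℕ) (e : V × V) :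
    FWLColor.sndWL1 t (fwl2L G l t e) = wl1 G l t e.2 := by
  induction t generalizing e with
  | zero => rfl
  | succ t ih =>
    refine Prod.ext (ih e) ?_
    simp only [FWLColor.sndWL1, fwl2L, wl1, Multiset.filter_map, Multiset.map_map,
      Function.comp_def, ih, adjBit_fwl2L]
    rw [← Finset.filter_val, Finset.filter_filter]
    congr 2
    ext u
    simp +contextual [G.adj_comm]

/-- On an unlabeled regular graph, 1-WL gives all vertices the same color. -/
theorem wl1_eq_of_isRegularOfDegree [G.LocallyFinite] {d : ℕ} (h : G.IsRegularOfDegree d)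
    (c : σ) (t : ℕ) (v w : V) : wl1 G (fun _ => c) t v = wl1 G (fun _ => c) t w := by
  induction t generalizing v w with
  | zero => rfl
  | succ t ih =>
    refine Prod.ext (ih v w) ?_
    have key (x : V) : (wl1 G (fun _ => c) (t + 1) x).2 =
        Multiset.replicate d (wl1 G (fun _ => c) t v) := by
      simp only [wl1]
      rw [Multiset.map_congr rfl fun u _ => ih u v, Multiset.map_const']
      congr 1
      rw [← h x, ← G.card_neighborFinset_eq_degree, ← Finset.card_val]
      congr!
    exact (key v).trans (key w).symm

end

/-- Corollary of Theorems 3 and 4: local 2-FWL has stronger link discriminating power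
than 1-WL. -/
theorem local_fwl2_stronger_than_wl1 :
    (∀ (σ : Type u) (V V' : Type v) [Fintype V] [Fintype V']
        (G : SimpleGraph V) (l : V → σ) (G' : SimpleGraph V') (l' : V' → σ)
        (e : V × V) (e' : V' × V'),
        IsTargetLink G e → IsTargetLink G' e' →
        FWL2LIndist G l G' l' e e' → WL1Indist G l G' l' e e') ∧
    (∃ (n n' : ℕ) (G : SimpleGraph (Fin n)) (G' : SimpleGraph (Fin n'))
        (e : Fin n × Fin n) (e' : Fin n' × Fin n'),
        IsTargetLink G e ∧ IsTargetLink G' e' ∧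
        WL1Indist G (fun _ => ()) G' (fun _ => ()) e e' ∧
        ¬ FWL2LIndist G (fun _ => ()) G' (fun _ => ()) e e') := by
  refine ⟨fun σ V V' _ _ G l G' l' e e' _ _ h t => ⟨?_, ?_⟩, ?_⟩
  · rw [← fstWL1_fwl2L, h t, fstWL1_fwl2L]
  · rw [← sndWL1_fwl2L, h t, sndWL1_fwl2L]
  · have hreg : (SimpleGraph.cycleGraph 6).IsRegularOfDegree 2 :=
      fun _ => SimpleGraph.cycleGraph_degree_three_le
    refine ⟨6, 6, SimpleGraph.cycleGraph 6, SimpleGraph.cycleGraph 6, (0, 2), (0, 3),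
      ⟨by decide, by decide⟩, ⟨by decide, by decide⟩,
      fun t => ⟨rfl, wl1_eq_of_isRegularOfDegree _ hreg () t _ _⟩, fun h => ?_⟩
    have hcard := congrArg (fun c => Multiset.card c.2) (h 1)
    simp only [fwl2L, Multiset.card_map, Finset.card_val] at hcard
    have h3 : (Finset.univ.filter fun u : Fin 6 => (SimpleGraph.cycleGraph 6).Adj u 2 ∨
        (SimpleGraph.cycleGraph 6).Adj 0 u).card = 3 := by decide
    have h4 : (Finset.univ.filter fun u : Fin 6 => (SimpleGraph.cycleGraph 6).Adj u 3 ∨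
        (SimpleGraph.cycleGraph 6).Adj 0 u).card = 4 := by decide
    have : 3 = 4 := by
      convert hcard
      · exact h3.symm
      · exact h4.symm
    omega
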